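/- arXiv:2109.08737 — 2 statements merged into one kernel-verified Lean document; each statement's English description precedes it below -/
import Mathlib

section
/- Let R be a commutative ring equipped with a derivation δ : R → R (an additive map satisfying δ(xy) = xδ(y) + δ(x)y, applied entrywise to matrices). For G ∈ M_n(R) define the iterated matrices by G_0 = I_n and G_{s+1} = G_s·G + δ(G_s). Let P ∈ GL_n(R) and set H = P·G·P⁻¹ + δ(P)·P⁻¹, with iterated matrices H_0 = I_n, H_{s+1} = H_s·H + δ(H_s). Then for every s ≥ 0 one has H_s = Σ_{m=0}^{s} binom(s,m) · δ^{s−m}(P) · G_m · P⁻¹, where δ^{j} denotes the j-fold entrywise application of δ. -/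
noncomputable section

/-- The iterated matrices of `G` relative to the entrywise derivation `δ`:
`G_0 = 1`, `G_{s+1} = G_s · G + δ(G_s)`. -/
def iterMatD {R : Type*} [CommRing R] {n : ℕ} (δ : R → R)
    (G : Matrix (Fin n) (Fin n) R) : ℕ → Matrix (Fin n) (Fin n) R
  | 0 => 1
  | s + 1 => iterMatD δ G s * G + (iterMatD δ G s).map δ

theorem map_der_mul {R : Type*} [CommRing R] {n : ℕ} (δ : Derivation ℤ R R)
    (A B : Matrix (Fin n) (Fin n) R) :
    (A * B).map ⇑δ = A.map ⇑δ * B + A * B.map ⇑δ := by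
  ext i j
  simp only [Matrix.map_apply, Matrix.mul_apply, Matrix.add_apply, map_sum, Derivation.leibniz,
    smul_eq_mul, ← Finset.sum_add_distrib]
  refine Finset.sum_congr rfl fun k _ => ?_
  ring

theorem map_der_sum {R : Type*} [CommRing R] {n : ℕ} (δ : Derivation ℤ R R)
    {ι : Type*} (t : Finset ι) (c : ι → ℕ) (A : ι → Matrix (Fin n) (Fin n) R) :
    (∑ i ∈ t, c i • A i).map ⇑δ = ∑ i ∈ t, c i • (A i).map ⇑δ := by
  ext i j
  simp only [Matrix.map_apply, Matrix.sum_apply, Matrix.smul_apply, map_sum, map_nsmul]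

theorem gauge_aux {R : Type*} [CommRing R] {n : ℕ}
    (δ : Derivation ℤ R R) (G P : Matrix (Fin n) (Fin n) R)
    (H : Matrix (Fin n) (Fin n) R)
    (hH : H * P = P * G + P.map ⇑δ) (s : ℕ) : iterMatD ⇑δ H s * P =
      ∑ ij ∈ Finset.HasAntidiagonal.antidiagonal s,
        s.choose ij.1 • (P.map ((⇑δ)^[ij.2]) * iterMatD ⇑δ G ij.1) := by
  induction s with
  | zero =>
    ext i j
    simp [iterMatD]
  | succ s ih =>
    rw [Finset.sum_antidiagonal_choose_succ_nsmul
      (fun i j => P.map ((⇑δ)^[j]) * iterMatD ⇑δ G i)]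
    have h1 : iterMatD ⇑δ H (s + 1) * P
        = (iterMatD ⇑δ H s * P) * G + (iterMatD ⇑δ H s * P).map ⇑δ := by
      rw [map_der_mul, iterMatD, add_mul, Matrix.mul_assoc, hH]
      noncomm_ring
    rw [h1, ih, map_der_sum, Finset.sum_mul, ← Finset.sum_add_distrib, ← Finset.sum_add_distrib]
    refine Finset.sum_congr rfl fun ij hij => ?_
    have hc : s.choose ij.2 = s.choose ij.1 :=
      (Nat.choose_symm_of_eq_add (Finset.HasAntidiagonal.mem_antidiagonal.mp hij).symm).symm
    have hm : P.map ((⇑δ)^[ij.2 + 1]) = (P.map ((⇑δ)^[ij.2])).map ⇑δ := by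
      ext i j
      simp only [Matrix.map_apply, Function.iterate_succ_apply']
    rw [hc, smul_mul_assoc, ← smul_add, ← smul_add, map_der_mul, hm, iterMatD, Matrix.mul_add,
      Matrix.mul_assoc]
    congr 1
    abel

/-- Under the gauge transformation `H = P·G·P⁻¹ + δ(P)·P⁻¹`, the iterated matrices satisfy
`H_s = Σ_{m=0}^{s} binom(s,m) · δ^{s−m}(P) · G_m · P⁻¹`. -/
theorem iterMat_gauge_transform {R : Type*} [CommRing R] {n : ℕ}
    (δ : Derivation ℤ R R) (G P : Matrix (Fin n) (Fin n) R) [Invertible P]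
    (H : Matrix (Fin n) (Fin n) R)
    (hH : H = P * G * ⅟P + P.map ⇑δ * ⅟P) :
    ∀ s : ℕ, iterMatD ⇑δ H s =
      ∑ m ∈ Finset.range (s + 1),
        s.choose m • (P.map ((⇑δ)^[s - m]) * iterMatD ⇑δ G m * ⅟P) := by
  intro s
  have h := gauge_aux δ G P H (by
    rw [hH, add_mul, Matrix.mul_assoc _ (⅟P) P, Matrix.mul_assoc _ (⅟P) P, invOf_mul_self,
      Matrix.mul_one, Matrix.mul_one]) s
  have h2 : iterMatD ⇑δ H s = (iterMatD ⇑δ H s * P) * ⅟P := by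
    rw [Matrix.mul_assoc, mul_invOf_self, Matrix.mul_one]
  rw [h2, h, Finset.sum_mul, Finset.Nat.sum_antidiagonal_eq_sum_range_succ_mk]
  refine Finset.sum_congr rfl fun m _ => ?_
  rw [smul_mul_assoc]

end
end

section
/- Let k be a field, N ≥ 1, and let M₁, …, M_N be k-vector spaces. Let V = M₁ × ⋯ × M_N with the canonical inclusions ι_i : M_i → V. Then the k-linear map φ : M₁ ⊗_k ⋯ ⊗_k M_N → Sym^N(V) determined by φ(m₁ ⊗ ⋯ ⊗ m_N) = class of ι₁(m₁) ⊗ ⋯ ⊗ ι_N(m_N) is injective. -/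
open scoped TensorProduct

noncomputable section

/-- The canonical linear map `M₁ ⊗ ⋯ ⊗ M_N → Sym^N(M₁ × ⋯ × M_N)`,
`m₁ ⊗ ⋯ ⊗ m_N ↦ class of ι₁(m₁) ⊗ ⋯ ⊗ ι_N(m_N)`, is injective. -/
theorem tensor_to_symmetricPower_injective
    (k : Type*) [Field k] (N : ℕ) (hN : 1 ≤ N)
    (M : Fin N → Type*) [∀ i, AddCommGroup (M i)] [∀ i, Module k (M i)]
    (symRel : Submodule k (⨂[k] _ : Fin N, (∀ i, M i)))
    (hsym : symRel = Submodule.span k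
      {x | ∃ (v : Fin N → ∀ i, M i) (σ : Equiv.Perm (Fin N)),
        x = PiTensorProduct.tprod k v - PiTensorProduct.tprod k fun i => v (σ i)})
    (φ : (⨂[k] i, M i) →ₗ[k] ((⨂[k] _ : Fin N, (∀ i, M i)) ⧸ symRel))
    (hφ : ∀ m : ∀ i, M i,
      φ (PiTensorProduct.tprod k m) =
        Submodule.Quotient.mk (PiTensorProduct.tprod k fun i => Pi.single i (m i))) :
    Function.Injective φ := by
  classical
  let T : MultilinearMap k (fun _ : Fin N => ∀ i, M i) (⨂[k] i, M i) :=
    (PiTensorProduct.tprod k).compLinearMap (fun i => LinearMap.proj i)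
  have hT : ∀ v, T v = PiTensorProduct.tprod k (fun i => v i i) := fun v => rfl
  let S : MultilinearMap k (fun _ : Fin N => ∀ i, M i) (⨂[k] i, M i) :=
    ∑ τ : Equiv.Perm (Fin N), T.domDomCongr τ
  have hS : ∀ v, S v = ∑ τ : Equiv.Perm (Fin N),
      PiTensorProduct.tprod k (fun i => v (τ i) i) := by
    intro v
    simp only [S, sum_apply, MultilinearMap.domDomCongr_apply, hT]
  let L := PiTensorProduct.lift S
  have hL : symRel ≤ LinearMap.ker L := by
    rw [hsym, Submodule.span_le]
    rintro x ⟨v, σ, rfl⟩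
    simp only [SetLike.mem_coe, LinearMap.mem_ker, map_sub, L, PiTensorProduct.lift.tprod, hS]
    rw [sub_eq_zero]
    exact (Equiv.sum_comp (Equiv.mulLeft σ) (fun τ : Equiv.Perm (Fin N) =>
      PiTensorProduct.tprod k (fun i => v (τ i) i))).symm
  have key : (symRel.liftQ L hL).comp φ = LinearMap.id := by
    apply PiTensorProduct.ext
    ext m
    simp only [LinearMap.compMultilinearMap_apply, LinearMap.comp_apply, hφ, LinearMap.id_apply]
    rw [Submodule.liftQ_apply]
    simp only [L, PiTensorProduct.lift.tprod, hS]
    rw [Finset.sum_eq_single (1 : Equiv.Perm (Fin N))]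
    · simp
    · intro τ _ hτ
      obtain ⟨i, hi⟩ : ∃ i, τ i ≠ i := by
        by_contra! h
        exact hτ (Equiv.ext h)
      exact MultilinearMap.map_coord_zero _ i (Pi.single_eq_of_ne hi.symm _)
    · simp
  intro x y hxy
  have := congrArg (symRel.liftQ L hL) hxy
  rw [← LinearMap.comp_apply, ← LinearMap.comp_apply, key] at this
  exact this

end
end
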